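/- Let X be a nonempty zero-dimensional dense-in-itself metric space (with the metric topology). Then for every bimodal formula A: A ∈ S4DT1S if and only if A is valid in X. In particular, S4DT1S is the D-logic of any such space. -/

import Mathlib

/-!
Soundness holds because every point of `X` is closed and none is isolated. Conversely, a formula
outside the logic fails at a point of the canonical frame. On the subframe generated by that point
the difference relation contains all pairs of distinct points, so filtration yields a finite frame
`(W, R, RD)` that still refutes the formula and satisfies the frame conditions of all axioms. It
remains to find a cd-p-morphism from `X` onto this frame.

Place every `w ∈ W` at one point of `X`, surround that point by shrinking clopen rings, and label
the rings by the points of `{v | R w v ∧ RD w v}`, each label occurring on infinitely many rings;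
(DS) makes this set nonempty. Then repeat: in every labelled piece choose a separated net, let the
points of the net keep their label `w`, and surround them by rings labelled by the points `v` with
`R w v`. Under this process the label of a point can only move up along `R`. Assigning to each point
a label that it carries infinitely often gives a map `f`. Its values near `x` lie above `f x`, and
all points above `f x` occur among them because the nets become dense, so `f` is interior. Finally,
an `RD`-irreflexive `w` has no proper `R`-predecessors by (AT₁), hence `f` takes the value `w` at
the prescribed point only.
-/

/-- Bimodal formulas: propositional letters, falsum, implication, box, and
the difference modality `[≠]` (called `dbox` here). -/
inductive BForm : Type
  | var : ℕ → BForm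
  | bot : BForm
  | imp : BForm → BForm → BForm
  | box : BForm → BForm
  | dbox : BForm → BForm
  deriving DecidableEq

namespace BForm

/-- Classical negation. -/
def neg (A : BForm) : BForm := imp A bot

/-- Classical conjunction. -/
def conj (A B : BForm) : BForm := neg (imp A (neg B))

/-- `◇A = ¬□¬A`. -/
def dia (A : BForm) : BForm := neg (box (neg A))

/-- `⟨≠⟩A = ¬[≠]¬A`. -/
def ddia (A : BForm) : BForm := neg (dbox (neg A))

end BForm

/-- Truth at a point of a Kripke model over a frame `(W, R, R_D)`. -/
def ksat {W : Type} (R RD : W → W → Prop) (θ : ℕ → Set W) : W → BForm → Prop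
  | x, .var n => x ∈ θ n
  | _, .bot => False
  | x, .imp A B => ksat R RD θ x A → ksat R RD θ x B
  | x, .box A => ∀ y, R x y → ksat R RD θ y A
  | x, .dbox A => ∀ y, RD x y → ksat R RD θ y A

/-- Validity in a Kripke frame: truth at every point under every valuation. -/
def kvalid {W : Type} (R RD : W → W → Prop) (A : BForm) : Prop :=
  ∀ (θ : ℕ → Set W) (x : W), ksat R RD θ x A

/-- Truth at a point of a topological model. -/
def tsat {X : Type} [TopologicalSpace X] (θ : ℕ → Set X) : X → BForm → Prop
  | x, .var n => x ∈ θ n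
  | _, .bot => False
  | x, .imp A B => tsat θ x A → tsat θ x B
  | x, .box A => ∃ U : Set X, IsOpen U ∧ x ∈ U ∧ ∀ y ∈ U, tsat θ y A
  | x, .dbox A => ∀ y, y ≠ x → tsat θ y A

/-- Validity in a topological space. -/
def tvalid (X : Type) [TopologicalSpace X] (A : BForm) : Prop :=
  ∀ (θ : ℕ → Set X) (x : X), tsat θ x A

/-- Uniform substitution of formulas for propositional letters. -/
def substF (σ : ℕ → BForm) : BForm → BForm
  | .var n => σ n
  | .bot => .bot
  | .imp A B => .imp (substF σ A) (substF σ B)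
  | .box A => .box (substF σ A)
  | .dbox A => .dbox (substF σ A)

/-- Boolean evaluation of a formula, treating letters and modal formulas as atoms. -/
def beval (v : BForm → Bool) : BForm → Bool
  | .var n => v (.var n)
  | .bot => false
  | .imp A B => !(beval v A) || beval v B
  | .box A => v (.box A)
  | .dbox A => v (.dbox A)

/-- A classical tautology of the bimodal language. -/
def Tautology (A : BForm) : Prop := ∀ v : BForm → Bool, beval v A = true

/-- The letter `p`. -/
def pLet : BForm := .var 0
/-- The letter `q`. -/
def qLet : BForm := .var 1

/-- The least bimodal logic containing `K₂`, the S4D axioms and the extra axioms `Ax`,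
closed under modus ponens, uniform substitution, and both necessitation rules. -/
inductive Logic (Ax : Set BForm) : BForm → Prop
  | taut {A : BForm} : Tautology A → Logic Ax A
  | axKBox : Logic Ax (.imp (.box (.imp pLet qLet)) (.imp (.box pLet) (.box qLet)))
  | axKD : Logic Ax (.imp (.dbox (.imp pLet qLet)) (.imp (.dbox pLet) (.dbox qLet)))
  | axBD : Logic Ax (.imp pLet (.dbox (BForm.ddia pLet)))
  | ax4mD : Logic Ax (.imp (BForm.conj pLet (.dbox pLet)) (.dbox (.dbox pLet)))
  | axTBox : Logic Ax (.imp (.box pLet) pLet)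
  | ax4Box : Logic Ax (.imp (.box pLet) (.box (.box pLet)))
  | axDBox : Logic Ax (.imp (BForm.conj (.dbox pLet) pLet) (.box pLet))
  | extra {A : BForm} : A ∈ Ax → Logic Ax A
  | mp {A B : BForm} : Logic Ax (.imp A B) → Logic Ax A → Logic Ax B
  | subst {A : BForm} (σ : ℕ → BForm) : Logic Ax A → Logic Ax (substF σ A)
  | necBox {A : BForm} : Logic Ax A → Logic Ax (.box A)
  | necD {A : BForm} : Logic Ax A → Logic Ax (.dbox A)

/-- The axiom (DS): `[≠]p → ◇p`. -/
def dsAx : BForm := .imp (.dbox pLet) (BForm.dia pLet)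

/-- The axiom (AT₁): `[≠]p → [≠]□p`. -/
def at1Ax : BForm := .imp (.dbox pLet) (.dbox (.box pLet))

/-- The logic S4D. -/
def S4D : BForm → Prop := Logic ∅

/-- The logic S4DS = S4D + (DS). -/
def S4DS : BForm → Prop := Logic {dsAx}

/-- The logic S4DT1S = S4DS + (AT₁). -/
def S4DT1S : BForm → Prop := Logic {dsAx, at1Ax}

/-- `(W, R, R_D)` is an S4D-frame: `R` is reflexive and transitive, `R_D` is
symmetric and pseudo-transitive, and `R ⊆ R_D ∪ Id`. -/
structure IsS4DFrame {W : Type} (R RD : W → W → Prop) : Prop where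
  refl : ∀ x, R x x
  trans : ∀ ⦃x y z⦄, R x y → R y z → R x z
  symm : ∀ ⦃x y⦄, RD x y → RD y x
  ptrans : ∀ ⦃x y z⦄, RD x y → RD y z → x ≠ z → RD x z
  inc : ∀ ⦃x y⦄, R x y → RD x y ∨ x = y

/-- A T₁-frame: every `R_D`-irreflexive point is `R`-minimal. -/
def IsT1Frame {W : Type} (R RD : W → W → Prop) : Prop :=
  ∀ x, ¬ RD x x → ∀ y, R y x → y = x

/-- A DS-frame: every `R_D`-irreflexive point has an `R`-successor distinct from itself. -/
def IsDSFrame {W : Type} (R RD : W → W → Prop) : Prop :=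
  ∀ x, ¬ RD x x → ∃ y, y ≠ x ∧ R x y

/-- A cd-p-morphism from a topological space `X` onto a Kripke frame `(W, R, R_D)`. -/
structure IsCdPMorphism {X : Type} [TopologicalSpace X] {W : Type}
    (R RD : W → W → Prop) (f : X → W) : Prop where
  surj : Function.Surjective f
  cl : ∀ w : W, closure (f ⁻¹' {w}) = f ⁻¹' {v | R v w}
  diff : ∀ w : W, {x : X | ∃ y, y ≠ x ∧ f y = w} = f ⁻¹' {v | RD v w}

/-- A p-morphism between Kripke frames. -/
structure IsPMorphism {W W' : Type} (R RD : W → W → Prop) (R' RD' : W' → W' → Prop)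
    (f : W → W') : Prop where
  surj : Function.Surjective f
  forth : ∀ ⦃x y⦄, R x y → R' (f x) (f y)
  forthD : ∀ ⦃x y⦄, RD x y → RD' (f x) (f y)
  back : ∀ x z, R' (f x) z → ∃ y, R x y ∧ f y = z
  backD : ∀ x z, RD' (f x) z → ∃ y, RD x y ∧ f y = z

/-- The Alexandrov topology on `W` whose open sets are the `R`-upward-closed sets. -/
def alexandrov {W : Type} (R : W → W → Prop) : TopologicalSpace W where
  IsOpen U := ∀ ⦃x⦄, x ∈ U → ∀ ⦃y⦄, R x y → y ∈ U
  isOpen_univ := fun _ _ _ _ => trivial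
  isOpen_inter := fun _ _ hU hV x hx y hxy => ⟨hU hx.1 hxy, hV hx.2 hxy⟩
  isOpen_sUnion := fun _ hS x hx y hxy => by
    obtain ⟨U, hU, hxU⟩ := hx
    exact ⟨U, hU, hS U hU hxU hxy⟩

open Set Filter Topology Function

/-! ### Soundness -/

section Soundness

variable {X : Type} [TopologicalSpace X] {θ : ℕ → Set X} {x : X} {A B : BForm}

theorem tsat_box : tsat θ x (.box A) ↔ ∀ᶠ y in 𝓝 x, tsat θ y A := by
  rw [eventually_nhds_iff]
  exact exists_congr fun U => by tauto

theorem tsat_conj : tsat θ x (A.conj B) ↔ tsat θ x A ∧ tsat θ x B := by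
  simp only [BForm.conj, BForm.neg, tsat]
  tauto

theorem tsat_dia : tsat θ x A.dia ↔ ∃ᶠ y in 𝓝 x, tsat θ y A :=
  not_congr tsat_box

theorem tsat_substF (σ : ℕ → BForm) :
    tsat θ x (substF σ A) ↔ tsat (fun n => {y | tsat θ y (σ n)}) x A := by
  induction A generalizing x with
  | var n => rfl
  | bot => rfl
  | imp A B hA hB => simp only [substF, tsat, hA, hB]
  | box A hA => simp only [substF, tsat, hA]
  | dbox A hA => simp only [substF, tsat, hA]

open Classical in
theorem beval_decide_tsat : beval (fun B => decide (tsat θ x B)) A = true ↔ tsat θ x A := by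
  induction A with
  | var n => exact decide_eq_true_iff
  | bot => exact iff_of_false Bool.false_ne_true id
  | imp A B hA hB =>
    rw [beval, tsat, ← hA, ← hB, Bool.or_eq_true, Bool.not_eq_true', ← Bool.not_eq_true,
      imp_iff_not_or]
  | box A _ => exact decide_eq_true_iff
  | dbox A _ => exact decide_eq_true_iff

theorem Tautology.tvalid (hA : Tautology A) : tvalid X A := fun _ _ =>
  beval_decide_tsat.1 (hA _)

theorem Logic.tvalid {Ax : Set BForm} (hAx : ∀ B ∈ Ax, tvalid X B) (h : Logic Ax A) :
    tvalid X A := by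
  induction h with
  | taut h => exact h.tvalid
  | axKBox => exact fun θ x hpq hp => tsat_box.2 ((tsat_box.1 hp).mp (tsat_box.1 hpq))
  | axKD => exact fun θ x hpq hp y hy => hpq y hy (hp y hy)
  | axBD => exact fun θ x hp y hyx hnp => hnp x hyx.symm hp
  | ax4mD =>
    rintro θ x hp y - z -
    rw [tsat_conj] at hp
    exact (eq_or_ne z x).elim (· ▸ hp.1) (hp.2 z)
  | axTBox => exact fun θ x hp => (tsat_box.1 hp).self_of_nhds
  | ax4Box =>
    exact fun θ x hp => tsat_box.2 ((tsat_box.1 hp).eventually_nhds.mono fun _ => tsat_box.2)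
  | axDBox =>
    intro θ x hp
    rw [tsat_conj] at hp
    exact tsat_box.2 (.of_forall fun y => (eq_or_ne y x).elim (· ▸ hp.2) (hp.1 y))
  | extra h => exact hAx _ h
  | mp _ _ hAB hA => exact fun θ x => hAB θ x (hA θ x)
  | subst σ _ h => exact fun θ x => (tsat_substF σ).2 (h _ x)
  | necBox _ h => exact fun θ x => tsat_box.2 (.of_forall (h θ))
  | necD _ h => exact fun θ x y _ => h θ y

variable (X)

theorem tvalid_dsAx [PerfectSpace X] : tvalid X dsAx := by
  intro θ x hp
  have hne : ∀ᶠ y in 𝓝[≠] x, tsat θ y pLet := eventually_nhdsWithin_of_forall hp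
  exact tsat_dia.2 (hne.frequently.filter_mono inf_le_left)

theorem tvalid_at1Ax [T1Space X] : tvalid X at1Ax := fun _ _ hp _ hy =>
  tsat_box.2 ((eventually_ne_nhds hy).mono hp)

theorem S4DT1S.tvalid [T1Space X] [PerfectSpace X] (hA : S4DT1S A) : tvalid X A :=
  Logic.tvalid (by rintro _ (rfl | rfl); exacts [tvalid_dsAx X, tvalid_at1Ax X]) hA

end Soundness

/-! ### The canonical frame -/

section Lindenbaum

variable {Ax T T₁ T₂ : Set BForm} {A B : BForm}

/-- A theory of the logic axiomatized by `Ax`: a set of formulas containing the logic and closed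
under modus ponens, but not necessarily under necessitation or substitution. -/
structure IsTheory (Ax T : Set BForm) : Prop where
  mem_of_logic : ∀ {A}, Logic Ax A → A ∈ T
  mp_mem : ∀ {A B}, A.imp B ∈ T → A ∈ T → B ∈ T

/-- A maximal consistent theory, the points of the canonical frame. Maximality is encoded by
membership commuting with implication. -/
structure MaximalTheory (Ax : Set BForm) where
  carrier : Set BForm
  mem_of_logic' : ∀ {A}, Logic Ax A → A ∈ carrier
  bot_notMem' : BForm.bot ∉ carrier
  imp_mem_iff' : ∀ {A B}, A.imp B ∈ carrier ↔ (A ∈ carrier → B ∈ carrier)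

namespace MaximalTheory

instance : SetLike (MaximalTheory Ax) BForm where
  coe := carrier
  coe_injective x y h := by cases x; cases y; congr

variable (x : MaximalTheory Ax)

theorem mem_of_logic (h : Logic Ax A) : A ∈ x :=
  x.mem_of_logic' h

theorem bot_notMem : BForm.bot ∉ x :=
  x.bot_notMem'

theorem imp_mem_iff : A.imp B ∈ x ↔ (A ∈ x → B ∈ x) :=
  x.imp_mem_iff'

theorem neg_mem_iff : A.neg ∈ x ↔ A ∉ x := by
  simp only [BForm.neg, x.imp_mem_iff, iff_false_intro x.bot_notMem]

theorem conj_mem_iff : A.conj B ∈ x ↔ A ∈ x ∧ B ∈ x := by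
  simp only [BForm.conj, x.neg_mem_iff, x.imp_mem_iff, Classical.not_imp, not_not]

theorem mem_of_logic_imp (h : Logic Ax (A.imp B)) (hA : A ∈ x) : B ∈ x :=
  x.imp_mem_iff.1 (x.mem_of_logic h) hA

theorem exists_mem_notMem {y : MaximalTheory Ax} (h : x ≠ y) : ∃ C, C ∈ x ∧ C ∉ y := by
  by_contra! hxy
  refine h (SetLike.ext fun C => ⟨hxy C, fun hy => ?_⟩)
  by_contra hx
  exact y.neg_mem_iff.1 (hxy _ (x.neg_mem_iff.2 hx)) hy

end MaximalTheory

theorem continuous_beval (A : BForm) : Continuous fun v : BForm → Bool => beval v A := by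
  induction A with
  | var n => exact continuous_apply _
  | bot => exact continuous_const
  | imp A B hA hB =>
    exact (continuous_of_discreteTopology (f := fun b : Bool × Bool => !b.1 || b.2)).comp
      (hA.prodMk hB)
  | box A _ => exact continuous_apply _
  | dbox A _ => exact continuous_apply _

theorem beval_imp {v : BForm → Bool} :
    beval v (A.imp B) = true ↔ (beval v A = true → beval v B = true) := by
  rw [beval, Bool.or_eq_true, Bool.not_eq_true', ← Bool.not_eq_true, imp_iff_not_or]

theorem isTheory_logic : IsTheory Ax {A | Logic Ax A} :=
  ⟨id, Logic.mp⟩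

namespace IsTheory

theorem mem_of_forall_beval (hT : IsTheory Ax T) (s : Finset BForm) (hs : ↑s ⊆ T)
    (h : ∀ v, (∀ B ∈ s, beval v B = true) → beval v A = true) : A ∈ T := by
  induction s using Finset.induction_on generalizing A with
  | empty => exact hT.mem_of_logic (.taut fun v => h v (by simp))
  | insert B s _ ih =>
    rw [Finset.coe_insert, insert_subset_iff] at hs
    refine hT.mp_mem (ih hs.2 fun v hv => beval_imp.2 fun hB => h v ?_) hs.1
    exact (Finset.forall_mem_insert ..).2 ⟨hB, hv⟩

-- Compactness of the space of all valuations takes the place of Zorn's lemma.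
theorem exists_valuation (hT : IsTheory Ax T) (hA : A ∉ T) :
    ∃ v, (∀ B ∈ T, beval v B = true) ∧ beval v A ≠ true := by
  have hclosed (B : BForm) (b : Bool) : IsClosed {v | beval v B = b} :=
    isClosed_eq (continuous_beval B) continuous_const
  obtain ⟨v, hvA, hvT⟩ := (hclosed A false).isCompact.inter_iInter_nonempty
    (fun B : T => {v | beval v B = true}) (fun B => hclosed B true) fun s => by
      by_contra hs
      refine hA (hT.mem_of_forall_beval (s.map (.subtype _)) (by simp) fun v hv => ?_)
      by_contra hvA
      refine hs ⟨v, eq_false_of_ne_true hvA, mem_iInter₂.2 fun B hB => hv B ?_⟩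
      exact Finset.mem_map_of_mem _ hB
  exact ⟨v, fun B hB => mem_iInter.1 hvT ⟨B, hB⟩, ne_true_of_eq_false hvA⟩

/-- Lindenbaum's lemma. -/
theorem mem_iff_forall_maximalTheory (hT : IsTheory Ax T) :
    A ∈ T ↔ ∀ y : MaximalTheory Ax, T ⊆ y → A ∈ y := by
  refine ⟨fun hA y hy => hy hA, fun h => ?_⟩
  by_contra hA
  obtain ⟨v, hvT, hvA⟩ := hT.exists_valuation hA
  exact hvA (h ⟨{B | beval v B = true}, fun hB => hvT _ (hT.mem_of_logic hB),
    Bool.false_ne_true, beval_imp⟩ hvT)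

theorem mem_of_forall_imp (hT : IsTheory Ax T) (h : ∀ y : MaximalTheory Ax, A ∈ y → B ∈ y)
    (hA : A ∈ T) : B ∈ T :=
  hT.mem_iff_forall_maximalTheory.2 fun y hy => h y (hy hA)

theorem exists_maximalTheory_union_subset (h₁ : IsTheory Ax T₁) (h₂ : IsTheory Ax T₂)
    (h : ∀ E ∈ T₂, E.neg ∉ T₁) : ∃ y : MaximalTheory Ax, T₁ ⊆ y ∧ T₂ ⊆ y := by
  have hT : IsTheory Ax {C | ∃ E ∈ T₂, E.imp C ∈ T₁} := by
    refine ⟨fun {C} hC => ⟨C, h₂.mem_of_logic hC, ?_⟩, ?_⟩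
    · exact h₁.mem_iff_forall_maximalTheory.2 fun y _ => y.imp_mem_iff.2 id
    · rintro B C ⟨E, hE, hBC⟩ ⟨F, hF, hB⟩
      refine ⟨E.conj F, h₂.mem_iff_forall_maximalTheory.2 fun y hy =>
        y.conj_mem_iff.2 ⟨hy hE, hy hF⟩, h₁.mem_iff_forall_maximalTheory.2 fun y hy => ?_⟩
      rw [y.imp_mem_iff, y.conj_mem_iff]
      exact fun hEF => y.imp_mem_iff.1 (y.imp_mem_iff.1 (hy hBC) hEF.1)
        (y.imp_mem_iff.1 (hy hB) hEF.2)
  have hbot : BForm.bot ∉ {C | ∃ E ∈ T₂, E.imp C ∈ T₁} := fun ⟨E, hE, hE'⟩ => h E hE hE'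
  rw [hT.mem_iff_forall_maximalTheory, not_forall] at hbot
  obtain ⟨y, hy⟩ := hbot
  have hTy := (Classical.not_imp.1 hy).1
  refine ⟨y, fun C hC => hTy ⟨.imp .bot .bot, ?_, ?_⟩, fun C hC => hTy ⟨C, hC, ?_⟩⟩
  · exact h₂.mem_iff_forall_maximalTheory.2 fun z _ => z.imp_mem_iff.2 id
  · exact h₁.mem_of_forall_imp (fun z hz => z.imp_mem_iff.2 fun _ => hz) hC
  · exact h₁.mem_iff_forall_maximalTheory.2 fun z _ => z.imp_mem_iff.2 id

end IsTheory

theorem logic_iff_forall_maximalTheory : Logic Ax A ↔ ∀ y : MaximalTheory Ax, A ∈ y :=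
  isTheory_logic.mem_iff_forall_maximalTheory.trans
    (forall_congr' fun y => forall_prop_of_true fun _ => y.mem_of_logic)

end Lindenbaum

/-- An S4D-frame satisfying the first-order correspondents of (AT₁) and (DS). -/
structure IsS4DT1SFrame {W : Type} (R RD : W → W → Prop) : Prop extends IsS4DFrame R RD where
  t1 : IsT1Frame R RD
  ds : IsDSFrame R RD

theorem IsS4DFrame.isDSFrame_iff {W : Type} {R RD : W → W → Prop} (hF : IsS4DFrame R RD) :
    IsDSFrame R RD ↔ ∀ x, ∃ y, R x y ∧ RD x y := by
  refine ⟨fun h x => ?_, fun h x hx => ?_⟩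
  · by_cases hx : RD x x
    · exact ⟨x, hF.refl x, hx⟩
    · obtain ⟨y, hne, hxy⟩ := h x hx
      exact ⟨y, hxy, (hF.inc hxy).resolve_right hne.symm⟩
  · obtain ⟨y, hxy, hxy'⟩ := h x
    exact ⟨y, fun h => hx (h ▸ hxy'), hxy⟩

namespace MaximalTheory

variable {Ax : Set BForm} {A B : BForm}

/-- The accessibility relation of `□` in the canonical frame. -/
def boxRel (x y : MaximalTheory Ax) : Prop := ∀ B, B.box ∈ x → B ∈ y

/-- The accessibility relation of `[≠]` in the canonical frame. -/
def dboxRel (x y : MaximalTheory Ax) : Prop := ∀ B, B.dbox ∈ x → B ∈ y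

variable (x : MaximalTheory Ax)

theorem isTheory_box : IsTheory Ax {B | B.box ∈ x} where
  mem_of_logic h := x.mem_of_logic (.necBox h)
  mp_mem {A B} hAB hA :=
    x.imp_mem_iff.1 (x.mem_of_logic_imp (.subst (fun | 0 => A | _ => B) .axKBox) hAB) hA

theorem isTheory_dbox : IsTheory Ax {B | B.dbox ∈ x} where
  mem_of_logic h := x.mem_of_logic (.necD h)
  mp_mem {A B} hAB hA :=
    x.imp_mem_iff.1 (x.mem_of_logic_imp (.subst (fun | 0 => A | _ => B) .axKD) hAB) hA

theorem box_mem_iff : B.box ∈ x ↔ ∀ y, boxRel x y → B ∈ y :=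
  x.isTheory_box.mem_iff_forall_maximalTheory

theorem dbox_mem_iff : B.dbox ∈ x ↔ ∀ y, dboxRel x y → B ∈ y :=
  x.isTheory_dbox.mem_iff_forall_maximalTheory

theorem ksat_canonical :
    ksat boxRel dboxRel (fun n => {y : MaximalTheory Ax | .var n ∈ y}) x B ↔ B ∈ x := by
  induction B generalizing x with
  | var n => rfl
  | bot => exact iff_of_false id x.bot_notMem
  | imp A B hA hB => rw [ksat, hA, hB, x.imp_mem_iff]
  | box B hB => simp only [ksat, hB, x.box_mem_iff]
  | dbox B hB => simp only [ksat, hB, x.dbox_mem_iff]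

variable {x} {y z : MaximalTheory Ax}

theorem boxRel_refl (x : MaximalTheory Ax) : boxRel x x := fun B =>
  x.mem_of_logic_imp (.subst (fun _ => B) .axTBox)

theorem boxRel_trans (hxy : boxRel x y) (hyz : boxRel y z) : boxRel x z := fun B hB =>
  hyz B (hxy _ (x.mem_of_logic_imp (.subst (fun _ => B) .ax4Box) hB))

theorem dboxRel_symm (hxy : dboxRel x y) : dboxRel y x := by
  intro B hB
  by_contra hBx
  have hdd : B.neg.ddia ∈ y :=
    hxy _ (x.mem_of_logic_imp (.subst (fun _ => B.neg) .axBD) (x.neg_mem_iff.2 hBx))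
  refine y.neg_mem_iff.1 hdd (y.isTheory_dbox.mem_of_forall_imp (fun z hz => ?_) hB)
  rw [z.neg_mem_iff, z.neg_mem_iff]
  exact not_not.2 hz

-- The witness is `C ∨ B`, where the formula `C` separates `x` from `z`.
theorem exists_dbox_mem_of_ne (hne : x ≠ z) (hB : B.dbox ∈ x) :
    ∃ E ∈ x, E.dbox ∈ x ∧ (E ∈ z → B ∈ z) := by
  obtain ⟨C, hCx, hCz⟩ := exists_mem_notMem x hne
  have mem_or_iff (w : MaximalTheory Ax) : C.neg.imp B ∈ w ↔ C ∈ w ∨ B ∈ w := by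
    rw [w.imp_mem_iff, w.neg_mem_iff, or_iff_not_imp_left]
  refine ⟨C.neg.imp B, (mem_or_iff x).2 (.inl hCx), ?_, fun h => ?_⟩
  · exact x.isTheory_dbox.mem_of_forall_imp (fun w hw => (mem_or_iff w).2 (.inr hw)) hB
  · exact ((mem_or_iff z).1 h).resolve_left hCz

theorem dboxRel_of_ne (hxy : dboxRel x y) (hyz : dboxRel y z) (hne : x ≠ z) : dboxRel x z := by
  intro B hB
  obtain ⟨E, hE, hE', hEB⟩ := exists_dbox_mem_of_ne hne hB
  exact hEB (hyz _ (hxy _ (x.mem_of_logic_imp (.subst (fun _ => E) .ax4mD)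
    (x.conj_mem_iff.2 ⟨hE, hE'⟩))))

theorem boxRel.dboxRel_of_ne (hxy : boxRel x y) (hne : x ≠ y) : dboxRel x y := by
  intro B hB
  obtain ⟨E, hE, hE', hEB⟩ := exists_dbox_mem_of_ne hne hB
  exact hEB (hxy _ (x.mem_of_logic_imp (.subst (fun _ => E) .axDBox)
    (x.conj_mem_iff.2 ⟨hE', hE⟩)))

theorem isS4DFrame (Ax : Set BForm) : IsS4DFrame (boxRel (Ax := Ax)) dboxRel where
  refl := boxRel_refl
  trans _ _ _ := boxRel_trans
  symm _ _ := dboxRel_symm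
  ptrans _ _ _ := dboxRel_of_ne
  inc _ _ hxy := or_iff_not_imp_right.2 hxy.dboxRel_of_ne

theorem isT1Frame (h : at1Ax ∈ Ax) : IsT1Frame (boxRel (Ax := Ax)) dboxRel := by
  intro x hx y hyx
  by_contra hne
  have hxy : dboxRel x y := dboxRel_symm (hyx.dboxRel_of_ne hne)
  exact hx fun B hB => hyx B (hxy _ (x.mem_of_logic_imp (.subst (fun _ => B) (.extra h)) hB))

theorem isDSFrame (h : dsAx ∈ Ax) : IsDSFrame (boxRel (Ax := Ax)) dboxRel := by
  refine (isS4DFrame Ax).isDSFrame_iff.2 fun x => ?_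
  refine x.isTheory_box.exists_maximalTheory_union_subset x.isTheory_dbox fun E hE => ?_
  have hdia : E.dia ∈ x := x.mem_of_logic_imp (.subst (fun _ => E) (.extra h)) hE
  exact x.neg_mem_iff.1 hdia

end MaximalTheory

/-! ### Generated subframes and filtration -/

section Kripke

variable {W V : Type} {R RD : W → W → Prop} {θ : ℕ → Set W} {x : W} {A : BForm} {S : Set W}

theorem ksat_subtype (hR : ∀ ⦃x y⦄, x ∈ S → R x y → y ∈ S)
    (hRD : ∀ ⦃x y⦄, x ∈ S → RD x y → y ∈ S) (x : S) :
    ksat (R on Subtype.val) (RD on Subtype.val) (fun n => Subtype.val ⁻¹' θ n) x A ↔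
      ksat R RD θ x A := by
  induction A generalizing x with
  | var n => rfl
  | bot => rfl
  | imp A B hA hB => rw [ksat, ksat, hA, hB]
  | box A hA =>
    simp only [ksat, hA]
    exact ⟨fun h y hxy => h ⟨y, hR x.2 hxy⟩ hxy, fun h y => h y⟩
  | dbox A hA =>
    simp only [ksat, hA]
    exact ⟨fun h y hxy => h ⟨y, hRD x.2 hxy⟩ hxy, fun h y => h y⟩

theorem IsS4DT1SFrame.subtype (hF : IsS4DT1SFrame R RD) (hR : ∀ ⦃x y⦄, x ∈ S → R x y → y ∈ S) :
    IsS4DT1SFrame (R on (Subtype.val : S → W)) (RD on (Subtype.val : S → W)) where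
  refl x := hF.refl x
  trans _ _ _ hxy hyz := hF.trans hxy hyz
  symm _ _ hxy := hF.symm hxy
  ptrans _ _ _ hxy hyz hne := hF.ptrans hxy hyz (Subtype.coe_ne_coe.2 hne)
  inc _ _ hxy := (hF.inc hxy).imp_right Subtype.ext
  t1 x hx y hyx := Subtype.ext (hF.t1 x hx y hyx)
  ds x hx := by
    obtain ⟨y, hne, hxy⟩ := hF.ds x hx
    exact ⟨⟨y, hR x.2 hxy⟩, fun h => hne (congrArg Subtype.val h), hxy⟩

/-- The carrier of the subframe generated by `x₀`, provided that `RD` is symmetric and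
pseudo-transitive and contains all pairs of distinct `R`-related points. -/
def dCone (RD : W → W → Prop) (x₀ : W) : Set W := {y | y = x₀ ∨ RD x₀ y}

namespace IsS4DFrame

variable {x₀ y : W} (hF : IsS4DFrame R RD)
include hF

theorem mem_dCone_of_diff (hx : x ∈ dCone RD x₀) (hxy : RD x y) : y ∈ dCone RD x₀ := by
  obtain rfl | hx := hx
  · exact .inr hxy
  · exact or_iff_not_imp_left.2 fun hne => hF.ptrans hx hxy (Ne.symm hne)

theorem mem_dCone (hx : x ∈ dCone RD x₀) (hxy : R x y) : y ∈ dCone RD x₀ := by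
  obtain hxy | rfl := hF.inc hxy
  exacts [hF.mem_dCone_of_diff hx hxy, hx]

theorem pairwise_dCone (x₀ : W) : (dCone RD x₀).Pairwise RD := by
  rintro x (rfl | hx) y (rfl | hy) hne
  · exact absurd rfl hne
  · exact hy
  · exact hF.symm hx
  · exact hF.ptrans (hF.symm hx) hy hne

end IsS4DFrame

/-- The set of subformulas of a formula, including the formula itself. -/
def subformulas : BForm → Set BForm
  | .var n => {.var n}
  | .bot => {.bot}
  | .imp A B => insert (.imp A B) (subformulas A ∪ subformulas B)
  | .box A => insert (.box A) (subformulas A)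
  | .dbox A => insert (.dbox A) (subformulas A)

theorem finite_subformulas (A : BForm) : (subformulas A).Finite := by
  induction A with
  | var n => exact finite_singleton _
  | bot => exact finite_singleton _
  | imp A B hA hB => exact (hA.union hB).insert _
  | box A hA => exact hA.insert _
  | dbox A hA => exact hA.insert _

theorem ksat_filtration (hrefl : ∀ x, R x x) (htrans : ∀ ⦃x y z⦄, R x y → R y z → R x z)
    {π : W → V} (hπ : ∀ ⦃B⦄, B ∈ subformulas A → ∀ ⦃x y⦄, π x = π y →
      ksat R RD θ x B → ksat R RD θ y B) (x : W) :
    ksat (Relation.ReflTransGen (Relation.Map R π π)) (Relation.Map RD π π) (fun n => π '' θ n)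
      (π x) A ↔ ksat R RD θ x A := by
  induction A generalizing x with
  | var n => exact ⟨fun ⟨_, hy, hyx⟩ => hπ rfl hyx hy, mem_image_of_mem π⟩
  | bot => rfl
  | imp A B ihA ihB =>
    rw [ksat, ksat, ihA fun C hC => hπ (.inr (.inl hC)), ihB fun C hC => hπ (.inr (.inr hC))]
  | box A ih =>
    have ih := ih fun C hC => hπ (.inr hC)
    refine ⟨fun h y hxy => (ih y).1 (h _ (.single ⟨x, y, hxy, rfl, rfl⟩)), fun h t ht => ?_⟩
    obtain ⟨z, rfl, hz⟩ : ∃ z, π z = t ∧ ksat R RD θ z A.box := by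
      induction ht with
      | refl => exact ⟨x, rfl, h⟩
      | tail _ hst ihs =>
        obtain ⟨z, rfl, hz⟩ := ihs
        obtain ⟨a, b, hab, haz, rfl⟩ := hst
        exact ⟨b, rfl, fun c hbc => hπ (.inl rfl) haz.symm hz c (htrans hab hbc)⟩
    exact (ih z).2 (hz z (hrefl z))
  | dbox A ih =>
    have ih := ih fun C hC => hπ (.inr hC)
    refine ⟨fun h y hxy => (ih y).1 (h _ ⟨x, y, hxy, rfl, rfl⟩), ?_⟩
    rintro h _ ⟨a, b, hab, hax, rfl⟩
    exact (ih b).2 (hπ (.inl rfl) hax.symm h b hab)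

theorem pairwise_relationMap (hRD : Pairwise RD) {π : W → V} (hπ : Surjective π) :
    Pairwise (Relation.Map RD π π) := by
  intro s t hne
  obtain ⟨⟨x, rfl⟩, y, rfl⟩ := hπ s, hπ t
  exact ⟨x, y, hRD (ne_of_apply_ne π hne), rfl, rfl⟩

-- An `RD`-irreflexive class is the class of a single irreflexive point only, because `RD` is
-- filtered minimally; this transfers the frame conditions of (AT₁) and (DS).
theorem IsS4DT1SFrame.filtration (hF : IsS4DT1SFrame R RD) (hRD : Pairwise RD) {π : W → V}
    (hπ : Surjective π) :
    IsS4DT1SFrame (Relation.ReflTransGen (Relation.Map R π π)) (Relation.Map RD π π) where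
  refl _ := .refl
  trans _ _ _ := .trans
  symm := by
    rintro _ _ ⟨x, y, hxy, rfl, rfl⟩
    exact ⟨y, x, hF.symm hxy, rfl, rfl⟩
  ptrans _ _ _ _ _ hne := pairwise_relationMap hRD hπ hne
  inc _ _ _ := or_iff_not_imp_right.2 fun hne => pairwise_relationMap hRD hπ hne
  t1 s hs t hts := by
    induction hts using Relation.ReflTransGen.head_induction_on with
    | refl => rfl
    | head h _ ih =>
      obtain ⟨x, y, hxy, rfl, rfl⟩ := h
      rw [← ih] at hs
      rw [hF.t1 y (fun hyy => hs ⟨y, y, hyy, rfl, rfl⟩) x hxy]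
      exact ih
  ds s hs := by
    obtain ⟨x, rfl⟩ := hπ s
    obtain ⟨y, hxy, hxy'⟩ := hF.isDSFrame_iff.1 hF.ds x
    exact ⟨π y, fun h => hs ⟨x, y, hxy', rfl, h⟩, .single ⟨x, y, hxy, rfl, rfl⟩⟩

theorem exists_finite_frame_of_not_kvalid (hF : IsS4DT1SFrame R RD) (hA : ¬ kvalid R RD A) :
    ∃ (V : Type) (_ : Finite V) (R' RD' : V → V → Prop),
      IsS4DT1SFrame R' RD' ∧ Pairwise RD' ∧ ¬ kvalid R' RD' A := by
  simp only [kvalid, not_forall] at hA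
  obtain ⟨θ, x₀, hx₀⟩ := hA
  have hR : ∀ ⦃x y⦄, x ∈ dCone RD x₀ → R x y → y ∈ dCone RD x₀ := fun _ _ => hF.mem_dCone
  have hG := hF.subtype hR
  have hRD : Pairwise (RD on (Subtype.val : dCone RD x₀ → W)) :=
    (hF.pairwise_dCone x₀).subtype
  let π : dCone RD x₀ → Set BForm := fun y => {B | B ∈ subformulas A ∧ ksat R RD θ y B}
  have hfin : Finite (range π) := by
    refine ((finite_subformulas A).finite_subsets.subset ?_).to_subtype
    rintro _ ⟨y, rfl⟩
    exact sep_subset _ _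
  refine ⟨range π, hfin, _, _, hG.filtration hRD rangeFactorization_surjective,
    pairwise_relationMap hRD rangeFactorization_surjective, fun hval => hx₀ ?_⟩
  have hsat {B : BForm} := ksat_subtype (A := B) (θ := θ) hR fun _ _ => hF.mem_dCone_of_diff
  refine (hsat ⟨x₀, .inl rfl⟩).1 ((ksat_filtration hG.refl hG.trans ?_ _).1 (hval _ _))
  intro B hB x y hxy hx
  rw [hsat] at hx ⊢
  have hπ : π x = π y := congrArg Subtype.val hxy
  have hBy : B ∈ π y := hπ ▸ ⟨hB, hx⟩
  exact hBy.2

end Kripke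

theorem exists_finite_frame {A : BForm} (hA : ¬ S4DT1S A) :
    ∃ (V : Type) (_ : Finite V) (R RD : V → V → Prop),
      IsS4DT1SFrame R RD ∧ Pairwise RD ∧ ¬ kvalid R RD A := by
  have hF : IsS4DT1SFrame (MaximalTheory.boxRel (Ax := {dsAx, at1Ax})) MaximalTheory.dboxRel :=
    { MaximalTheory.isS4DFrame _ with
      t1 := MaximalTheory.isT1Frame (by simp)
      ds := MaximalTheory.isDSFrame (by simp) }
  refine exists_finite_frame_of_not_kvalid hF fun hval => hA ?_
  exact logic_iff_forall_maximalTheory.2 fun y => y.ksat_canonical.1 (hval _ y)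

/-! ### Truth preservation along cd-p-morphisms -/

namespace IsCdPMorphism

variable {X W : Type} [TopologicalSpace X] {R RD : W → W → Prop} {f : X → W}

theorem frequently_iff (hf : IsCdPMorphism R RD f) {x : X} {w : W} :
    (∃ᶠ y in 𝓝 x, f y = w) ↔ R (f x) w :=
  mem_closure_iff_frequently.symm.trans (Set.ext_iff.1 (hf.cl w) x)

theorem exists_ne_iff (hf : IsCdPMorphism R RD f) {x : X} {w : W} :
    (∃ y, y ≠ x ∧ f y = w) ↔ RD (f x) w :=
  Set.ext_iff.1 (hf.diff w) x

theorem tsat_preimage_iff [Finite W] (hf : IsCdPMorphism R RD f) {θ : ℕ → Set W} {A : BForm}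
    {x : X} : tsat (fun n => f ⁻¹' θ n) x A ↔ ksat R RD θ (f x) A := by
  induction A generalizing x with
  | var n => rfl
  | bot => rfl
  | imp A B hA hB => rw [tsat, ksat, hA, hB]
  | box A hA =>
    calc tsat (fun n => f ⁻¹' θ n) x A.box
      _ ↔ ∀ᶠ y in 𝓝 x, ∀ w, f y = w → ksat R RD θ w A := by
        simp only [tsat_box, hA, forall_eq']
      _ ↔ ∀ w, R (f x) w → ksat R RD θ w A := by
        rw [eventually_all]
        refine forall_congr' fun w => ?_
        rw [← hf.frequently_iff, Filter.Frequently]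
        by_cases hw : ksat R RD θ w A <;> simp [hw]
  | dbox A hA =>
    simp only [tsat, ksat, hA, ← hf.exists_ne_iff, forall_exists_index, and_imp]
    exact ⟨fun h w y hne hy => hy ▸ h y hne, fun h y hne => h _ y hne rfl⟩

theorem kvalid_of_tvalid [Finite W] (hf : IsCdPMorphism R RD f) {A : BForm}
    (hA : tvalid X A) : kvalid R RD A := fun θ w => by
  obtain ⟨x, rfl⟩ := hf.surj w
  exact hf.tsat_preimage_iff.1 (hA _ x)

end IsCdPMorphism

/-! ### Neighbourhood bases and nets -/

theorem exists_seq_frequently_eq {W : Type*} [Countable W] {L : Set W} (hL : L.Nonempty) :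
    ∃ e : ℕ → W, (∀ k, e k ∈ L) ∧ ∀ v ∈ L, ∃ᶠ k in atTop, e k = v := by
  have := hL.to_subtype
  obtain ⟨g, hg⟩ := exists_surjective_nat L
  refine ⟨fun k => g k.unpair.1, fun k => (g _).2, fun v hv => frequently_atTop.2 fun n => ?_⟩
  obtain ⟨m, hm⟩ := hg ⟨v, hv⟩
  exact ⟨Nat.pair m n, Nat.right_le_pair m n, by simp only [Nat.unpair_pair, hm]⟩

section Rings

variable {X : Type*} [TopologicalSpace X] [T1Space X] {d : X} {U : ℕ → Set X}

theorem exists_antitone_clopen_basis [FirstCountableTopology X] [PerfectSpace X]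
    (hzero : TopologicalSpace.IsTopologicalBasis {s : Set X | IsClopen s}) {O : Set X}
    (hO : O ∈ 𝓝 d) :
    ∃ U : ℕ → Set X, (𝓝 d).HasAntitoneBasis U ∧ (∀ k, IsClopen (U k)) ∧ (∀ k, U k ⊆ O) ∧
      ∀ k, (U k \ U (k + 1)).Nonempty := by
  obtain ⟨V, hV, hVd⟩ := (hzero.nhds_hasBasis.restrict_subset hO).exists_antitone_subbasis
  have hdiff (m : ℕ) : ∀ᶠ n in atTop, (V m \ V n).Nonempty := by
    have hm : ∀ᶠ z in 𝓝[≠] d, z ∈ V m ∧ z ≠ d :=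
      (eventually_nhdsWithin_of_eventually_nhds (hVd.mem m)).and self_mem_nhdsWithin
    obtain ⟨z, hz, hne⟩ := hm.exists
    filter_upwards [hVd.eventually_subset (compl_singleton_mem_nhds hne.symm)] with n hn
    exact ⟨z, hz, fun hzn => hn hzn rfl⟩
  obtain ⟨φ, -, hφ, hbasis⟩ := hVd.subbasis_with_rel hdiff
  exact ⟨_, hbasis, fun k => (hV _).1.1, fun k => (hV _).2, fun k => hφ k.lt_succ_self⟩

theorem exists_mem_diff_succ_of_ne (hU : (𝓝 d).HasAntitoneBasis U) {z : X} (hz : z ∈ U 0)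
    (hne : z ≠ d) : ∃ k, z ∈ U k \ U (k + 1) := by
  by_contra! h
  have hmem (k : ℕ) : z ∈ U k := by
    induction k with
    | zero => exact hz
    | succ k ih => exact not_not.1 fun hk => h k ⟨ih, hk⟩
  obtain ⟨k, hk⟩ := hU.mem_iff.1 (compl_singleton_mem_nhds hne.symm)
  exact hk (hmem k) rfl

end Rings

theorem pairwise_disjoint_diff_succ {X : Type*} {U : ℕ → Set X} (hU : Antitone U) :
    Pairwise (Disjoint on fun k => U k \ U (k + 1)) :=
  (pairwise_disjoint_on _).2 fun _ _ hkl =>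
    disjoint_left.2 fun _ hk hl => hk.2 (hU (Nat.succ_le_of_lt hkl) hl.1)

theorem exists_option_eq_some_iff {X ι : Type*} {S : ι → Set X}
    (hS : Pairwise (Disjoint on S)) : ∃ f : X → Option ι, ∀ x i, f x = some i ↔ x ∈ S i := by
  have (x : X) : ∃ o : Option ι, ∀ i, o = some i ↔ x ∈ S i := by
    by_cases hx : ∃ i, x ∈ S i
    · obtain ⟨i, hi⟩ := hx
      refine ⟨some i, fun j => ⟨?_, fun hj => congrArg some ?_⟩⟩
      · rintro ⟨⟩
        exact hi
      · exact hS.eq (not_disjoint_iff.2 ⟨x, hi, hj⟩)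
    · exact ⟨none, fun i => iff_of_false (Option.some_ne_none i).symm fun hi => hx ⟨i, hi⟩⟩
  choose f hf using this
  exact ⟨f, hf⟩

section Nets

open Metric
open scoped NNReal

variable {X : Type*} [PseudoMetricSpace X]

theorem exists_pairwiseDisjoint_locallyFinite_ball {D : Set X} (hD : 0 < D.einfsep) :
    ∃ r > 0, D.PairwiseDisjoint (ball · r) ∧ LocallyFinite fun d : D => ball (d : X) r := by
  obtain ⟨ε, hε, hεD⟩ := ENNReal.lt_iff_exists_nnreal_btwn.1 hD
  have hε : (0 : ℝ) < ε := mod_cast hε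
  have hsep {x y : X} (hx : x ∈ D) (hy : y ∈ D) (hne : x ≠ y) : ε < dist x y := by
    have := hεD.trans_le (einfsep_le_edist_of_mem hx hy hne)
    rwa [edist_nndist, ENNReal.coe_lt_coe, ← NNReal.coe_lt_coe, coe_nndist] at this
  refine ⟨ε / 4, by positivity, fun x hx y hy hne => ball_disjoint_ball ?_, fun z =>
    ⟨ball z (ε / 4), ball_mem_nhds z (by positivity), Subsingleton.finite ?_⟩⟩
  · linarith [hsep hx hy hne]
  · rintro ⟨x, hx⟩ ⟨a, hax, haz⟩ ⟨y, hy⟩ ⟨b, hby, hbz⟩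
    by_contra hne
    have hxy := hsep hx hy (Subtype.coe_ne_coe.2 hne)
    rw [mem_ball] at haz hbz hax hby
    linarith [dist_triangle4 x a b y, dist_triangle_right a b z, dist_comm a x]

theorem exists_isSeparated_isCover (ε : ℝ≥0) (s : Set X) :
    ∃ N ⊆ s, IsSeparated ε N ∧ IsCover ε s N := by
  obtain ⟨N, hN⟩ := zorn_subset {N | N ⊆ s ∧ IsSeparated ε N} fun c hc hchain =>
    ⟨⋃₀ c, ⟨sUnion_subset fun N hN => (hc hN).1,
      (pairwise_sUnion hchain.directedOn).2 fun N hN => (hc hN).2⟩, fun _ => subset_sUnion_of_mem⟩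
  exact ⟨N, hN.prop.1, hN.prop.2, .of_maximal_isSeparated hN⟩

end Nets

/-! ### Labelled partitions and their splittings -/

universe u v

/-- A labelled partition: an open set `carrier` cut into open pieces, the fibres of `idx`, on each
of which `label` is constant. Both functions are total, and the labels off the carrier are the
values that a map approximated by labelled partitions has already been assigned there. -/
structure LabelledPartition (X : Type u) (W : Type v) [TopologicalSpace X] where
  carrier : Set X
  Index : Type u
  idx : X → Index
  label : X → W
  isOpen_fiber : ∀ i, IsOpen (carrier ∩ idx ⁻¹' {i})
  label_congr : ∀ ⦃x y⦄, x ∈ carrier → y ∈ carrier → idx x = idx y → label x = label y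

namespace LabelledPartition

variable {X : Type u} {W : Type v} [TopologicalSpace X]

/-- The piece of the partition that contains `x`, provided that `x` lies in the carrier. -/
def piece (P : LabelledPartition X W) (x : X) : Set X := P.carrier ∩ P.idx ⁻¹' {P.idx x}

/-- The partition of the whole space into one piece with label `w`. -/
@[simps]
def const (X : Type u) [TopologicalSpace X] (w : W) : LabelledPartition X W where
  carrier := univ
  Index := PUnit
  idx _ := ⟨⟩
  label _ := w
  isOpen_fiber _ := by simp
  label_congr _ _ _ _ _ := rfl

variable {P Q : LabelledPartition X W} {D : Set X} {x y : X}

theorem piece_mem_nhds (hx : x ∈ P.carrier) : P.piece x ∈ 𝓝 x :=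
  (P.isOpen_fiber _).mem_nhds ⟨hx, rfl⟩

theorem label_eq_of_mem_piece (hx : x ∈ P.carrier) (hy : y ∈ P.piece x) :
    P.label y = P.label x :=
  P.label_congr hy.1 hx hy.2

/-- `Q` arises from `P` by removing the set `D` from the carrier, giving each `d ∈ D` its final
label `c d`, and surrounding `d` by small pieces whose labels exhaust `L d`. -/
structure IsSplitting (P Q : LabelledPartition X W) (D : Set X) (c : X → W) (L : X → Set W) :
    Prop where
  subset_carrier : D ⊆ P.carrier
  carrier_eq : Q.carrier = P.carrier \ D
  label_of_mem : ∀ ⦃d⦄, d ∈ D → Q.label d = c d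
  label_of_notMem : ∀ ⦃x⦄, x ∉ D →
    Q.label x = P.label x ∨ ∃ d ∈ D, x ∈ P.piece d ∧ Q.label x ∈ L d
  exists_piece_subset : ∀ ⦃d⦄, d ∈ D → ∀ ⦃v⦄, v ∈ L d → ∀ ⦃U⦄, U ∈ 𝓝 d →
    ∃ y ∈ Q.carrier, Q.piece y ⊆ U ∧ Q.label y = v
  eventually_label_mem : ∀ ⦃d⦄, d ∈ D → ∀ᶠ y in 𝓝[≠] d, Q.label y ∈ L d

/-- Pairwise disjoint antitone neighbourhood bases `U d` of the points `d ∈ D` made of clopen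
subsets of the pieces of `P`. The differences `U d k \ U d (k + 1)` are the rings around `d`. -/
structure IsRingSystem (P : LabelledPartition X W) (D : Set X) (U : X → ℕ → Set X) : Prop where
  hasAntitoneBasis : ∀ ⦃d⦄, d ∈ D → (𝓝 d).HasAntitoneBasis (U d)
  isClopen : ∀ ⦃d⦄, d ∈ D → ∀ k, IsClopen (U d k)
  subset_piece : ∀ ⦃d⦄, d ∈ D → U d 0 ⊆ P.piece d
  nonempty_ring : ∀ ⦃d⦄, d ∈ D → ∀ k, (U d k \ U d (k + 1)).Nonempty
  pairwiseDisjoint : D.PairwiseDisjoint (U · 0)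
  isClosed_biUnion : ∀ i, IsClosed (⋃ d ∈ D ∩ P.idx ⁻¹' {i}, U d 0)

theorem exists_isRingSystem {X : Type u} [MetricSpace X] [PerfectSpace X]
    (hzero : TopologicalSpace.IsTopologicalBasis {s : Set X | IsClopen s})
    {P : LabelledPartition X W} {D : Set X} (hD : D ⊆ P.carrier)
    (hsep : ∀ i, 0 < (D ∩ P.idx ⁻¹' {i}).einfsep) : ∃ U, IsRingSystem P D U := by
  choose r hr hdisj hfin using fun i => exists_pairwiseDisjoint_locallyFinite_ball (hsep i)
  have hbasis (d : D) := exists_antitone_clopen_basis hzero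
    (inter_mem (piece_mem_nhds (hD d.2)) (Metric.ball_mem_nhds (d : X) (hr (P.idx d))))
  choose! U hbasis hclopen hsub hring using SetCoe.forall.1 hbasis
  refine ⟨U, hbasis, hclopen, fun d hd => (hsub d hd 0).trans inter_subset_left, hring, ?_,
    fun i => ?_⟩
  · intro d hd e he hne
    by_cases hde : P.idx d = P.idx e
    · refine (hdisj (P.idx e) ⟨hd, hde⟩ ⟨he, rfl⟩ hne).mono ?_ ?_
      · exact hde ▸ (hsub d hd 0).trans inter_subset_right
      · exact (hsub e he 0).trans inter_subset_right
    · refine disjoint_left.2 fun x hxd hxe => hde ?_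
      exact (hsub d hd 0 hxd).1.2.symm.trans (hsub e he 0 hxe).1.2
  · rw [biUnion_eq_iUnion]
    refine ((hfin i).subset ?_).isClosed_iUnion fun d => (hclopen d d.2.1 0).isClosed
    rintro ⟨d, hd, rfl⟩
    exact (hsub d hd 0).trans inter_subset_right

namespace IsRingSystem

variable {U : X → ℕ → Set X} {d : X} {k : ℕ}

theorem subset_zero (hU : IsRingSystem P D U) (hd : d ∈ D) (k : ℕ) : U d k ⊆ U d 0 :=
  (hU.hasAntitoneBasis hd).antitone k.zero_le

theorem eq_of_mem (hU : IsRingSystem P D U) (hd : d ∈ D) (hx : x ∈ D) (hxd : x ∈ U d 0) :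
    x = d :=
  hU.pairwiseDisjoint.elim_set hx hd x (mem_of_mem_nhds ((hU.hasAntitoneBasis hx).mem 0)) hxd

theorem notMem_of_mem_ring (hU : IsRingSystem P D U) (hd : d ∈ D)
    (hx : x ∈ U d k \ U d (k + 1)) : x ∉ D := by
  intro hxD
  obtain rfl := hU.eq_of_mem hd hxD (hU.subset_zero hd k hx.1)
  exact hx.2 (mem_of_mem_nhds ((hU.hasAntitoneBasis hd).mem _))

theorem exists_ring_index (hU : IsRingSystem P D U) :
    ∃ ring : X → Option (D × ℕ),
      ∀ x p, ring x = some p ↔ x ∈ U p.1 p.2 \ U p.1 (p.2 + 1) := by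
  refine exists_option_eq_some_iff (S := fun p : D × ℕ => U p.1 p.2 \ U p.1 (p.2 + 1)) ?_
  rintro ⟨d, k⟩ ⟨e, l⟩ hne
  by_cases hde : d = e
  · subst hde
    have hkl : k ≠ l := fun h => hne (h ▸ rfl)
    exact pairwise_disjoint_diff_succ (hU.hasAntitoneBasis d.2).antitone hkl
  · refine (hU.pairwiseDisjoint d.2 e.2 (Subtype.coe_ne_coe.2 hde)).mono ?_ ?_
    · exact sdiff_subset.trans (hU.subset_zero d.2 k)
    · exact sdiff_subset.trans (hU.subset_zero e.2 l)

theorem isOpen_fiber_ring [T1Space X] (hU : IsRingSystem P D U) {ring : X → Option (D × ℕ)}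
    (hring : ∀ x p, ring x = some p ↔ x ∈ U p.1 p.2 \ U p.1 (p.2 + 1)) (i : P.Index)
    (o : Option (D × ℕ)) : IsOpen (P.carrier \ D ∩ (P.idx ⁻¹' {i} ∩ ring ⁻¹' {o})) := by
  cases o with
  | none =>
    convert (P.isOpen_fiber i).sdiff (hU.isClosed_biUnion i) using 1
    ext x
    simp only [mem_inter_iff, Set.mem_sdiff, mem_preimage, mem_singleton_iff, mem_iUnion₂,
      exists_prop]
    refine ⟨fun ⟨hx, hi, ho⟩ => ⟨⟨hx.1, hi⟩, ?_⟩, fun ⟨hx, hxU⟩ => ⟨⟨hx.1, ?_⟩, hx.2, ?_⟩⟩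
    · rintro ⟨d, hd, hxd⟩
      obtain ⟨k, hk⟩ := exists_mem_diff_succ_of_ne (hU.hasAntitoneBasis hd.1) hxd
        (ne_of_mem_of_not_mem hd.1 hx.2).symm
      exact Option.some_ne_none _ (((hring x (⟨d, hd.1⟩, k)).2 hk).symm.trans ho)
    · exact fun hxD => hxU ⟨x, ⟨hxD, hx.2⟩, mem_of_mem_nhds ((hU.hasAntitoneBasis hxD).mem 0)⟩
    · refine Option.eq_none_iff_forall_ne_some.2 fun ⟨d, k⟩ ho => ?_
      have hxd := hU.subset_zero d.2 k ((hring x (d, k)).1 ho).1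
      exact hxU ⟨d, ⟨d.2, (hU.subset_piece d.2 hxd).2.symm.trans hx.2⟩, hxd⟩
  | some p =>
    obtain ⟨d, k⟩ := p
    convert (P.isOpen_fiber i).inter ((hU.isClopen d.2 k).diff (hU.isClopen d.2 (k + 1))).isOpen
      using 1
    ext x
    have hx := hU.notMem_of_mem_ring (x := x) (k := k) d.2
    simp only [mem_inter_iff, mem_preimage, mem_singleton_iff, hring, Set.mem_sdiff] at hx ⊢
    tauto

theorem exists_labelledPartition [T1Space X] (hU : IsRingSystem P D U) (c : X → W)
    (e : X → ℕ → W) :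
    ∃ Q : LabelledPartition X W, Q.carrier = P.carrier \ D ∧ (∀ d ∈ D, Q.label d = c d) ∧
      (∀ x ∉ D, (∀ d ∈ D, x ∉ U d 0) → Q.label x = P.label x) ∧
      ∀ d ∈ D, ∀ k, ∀ x ∈ U d k \ U d (k + 1), Q.label x = e d k ∧ Q.piece x ⊆ U d k := by
  classical
  obtain ⟨ring, hring⟩ := hU.exists_ring_index
  let Q : LabelledPartition X W :=
    { carrier := P.carrier \ D
      Index := P.Index × Option (D × ℕ)
      idx x := (P.idx x, ring x)
      label x := if x ∈ D then c x else (ring x).elim (P.label x) fun p => e p.1 p.2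
      isOpen_fiber := fun (i, o) => by
        rw [← singleton_prod_singleton, mk_preimage_prod]
        exact hU.isOpen_fiber_ring hring i o
      label_congr := fun x y hx hy hxy => by
        obtain ⟨hidx, hxy⟩ := Prod.ext_iff.1 hxy
        simp only at hidx hxy
        rw [if_neg hx.2, if_neg hy.2, hxy, P.label_congr hx.1 hy.1 hidx] }
  refine ⟨Q, rfl, fun d hd => if_pos hd, fun x hx hxU => ?_, fun d hd k x hx => ?_⟩
  · have ho : ring x = none := Option.eq_none_iff_forall_ne_some.2 fun p hp =>
      hxU p.1 p.1.2 (hU.subset_zero p.1.2 p.2 ((hring x p).1 hp).1)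
    simp only [Q, if_neg hx, ho, Option.elim_none]
  · have ho : ring x = some (⟨d, hd⟩, k) := (hring x (⟨d, hd⟩, k)).2 hx
    refine ⟨by simp only [Q, if_neg (hU.notMem_of_mem_ring hd hx), ho, Option.elim_some], ?_⟩
    intro y hy
    exact ((hring y (⟨d, hd⟩, k)).1 ((Prod.ext_iff.1 hy.2).2.trans ho)).1

end IsRingSystem

theorem exists_isSplitting {X : Type u} [MetricSpace X] [PerfectSpace X] [Countable W]
    (hzero : TopologicalSpace.IsTopologicalBasis {s : Set X | IsClopen s})
    {P : LabelledPartition X W} {D : Set X} (hD : D ⊆ P.carrier)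
    (hsep : ∀ i, 0 < (D ∩ P.idx ⁻¹' {i}).einfsep) (c : X → W) {L : X → Set W}
    (hL : ∀ d, (L d).Nonempty) : ∃ Q, IsSplitting P Q D c L := by
  obtain ⟨U, hU⟩ := exists_isRingSystem hzero hD hsep
  choose e heL hefreq using fun d => exists_seq_frequently_eq (hL d)
  obtain ⟨Q, hcarrier, hlabelD, hlabel, hring⟩ := hU.exists_labelledPartition c e
  have label_mem {d x : X} (hd : d ∈ D) (hx : x ∈ U d 0) (hne : x ≠ d) : Q.label x ∈ L d := by
    obtain ⟨k, hk⟩ := exists_mem_diff_succ_of_ne (hU.hasAntitoneBasis hd) hx hne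
    exact (hring d hd k x hk).1 ▸ heL d k
  refine ⟨Q, hD, hcarrier, hlabelD, fun x hx => ?_, fun d hd v hv O hO => ?_, fun d hd => ?_⟩
  · by_cases hxU : ∃ d ∈ D, x ∈ U d 0
    · obtain ⟨d, hd, hxd⟩ := hxU
      exact .inr ⟨d, hd, hU.subset_piece hd hxd,
        label_mem hd hxd (ne_of_mem_of_not_mem hd hx).symm⟩
    · exact .inl (hlabel x hx fun d hd hxd => hxU ⟨d, hd, hxd⟩)
  · obtain ⟨k, hkv, hk⟩ :=
      ((hefreq d v hv).and_eventually ((hU.hasAntitoneBasis hd).eventually_subset hO)).exists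
    obtain ⟨x, hx⟩ := hU.nonempty_ring hd k
    have hxP := hU.subset_piece hd (hU.subset_zero hd k hx.1)
    exact ⟨x, hcarrier ▸ ⟨hxP.1, hU.notMem_of_mem_ring hd hx⟩, (hring d hd k x hx).2.trans hk,
      (hring d hd k x hx).1.trans hkv⟩
  · rw [eventually_nhdsWithin_iff]
    filter_upwards [(hU.hasAntitoneBasis hd).mem 0] with x hx hne using label_mem hd hx hne

theorem exists_net {X : Type u} [PseudoMetricSpace X] (P : LabelledPartition X W) {ε : ℝ}
    (hε : 0 < ε) :
    ∃ D ⊆ P.carrier, (∀ i, 0 < (D ∩ P.idx ⁻¹' {i}).einfsep) ∧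
      ∀ x ∈ P.carrier, ∃ d ∈ D, d ∈ P.piece x ∧ dist x d ≤ ε := by
  lift ε to NNReal using hε.le
  choose N hNsub hNsep hNcover using fun i =>
    exists_isSeparated_isCover ε (P.carrier ∩ P.idx ⁻¹' {i})
  have hfiber (i : P.Index) : (⋃ i, N i) ∩ P.idx ⁻¹' {i} ⊆ N i := by
    rintro x ⟨hx, rfl⟩
    obtain ⟨j, hj⟩ := mem_iUnion.1 hx
    obtain rfl : P.idx x = j := (hNsub j hj).2
    exact hj
  refine ⟨⋃ i, N i, iUnion_subset fun i => (hNsub i).trans inter_subset_left, fun i => ?_,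
    fun x hx => ?_⟩
  · have hle : (ε : ENNReal) ≤ ((⋃ i, N i) ∩ P.idx ⁻¹' {i}).einfsep :=
      le_einfsep fun x hx y hy hne => (hNsep i (hfiber i hx) (hfiber i hy) hne).le
    exact (ENNReal.coe_pos.2 (NNReal.coe_pos.1 hε)).trans_le hle
  · obtain ⟨d, hd, hxd⟩ := hNcover (P.idx x) ⟨hx, rfl⟩
    exact ⟨d, mem_iUnion_of_mem _ hd, hNsub _ hd, edist_le_coe.1 hxd⟩

/-! ### Interior extensions -/

section Filling

variable [Preorder W] {f : X → W}

/-- `f` extends the labelling `P.label` off the carrier to the whole space in such a way that `f` is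
an interior map into the Alexandrov space of `W` at the points of the carrier. -/
structure IsInteriorExtension (P : LabelledPartition X W) (f : X → W) : Prop where
  eq_label : ∀ ⦃x⦄, x ∉ P.carrier → f x = P.label x
  label_le : ∀ x, P.label x ≤ f x
  exists_mem_piece : ∀ ⦃x⦄, x ∈ P.carrier → ∃ y ∈ P.piece x, f y = P.label x
  frequently_iff : ∀ ⦃x⦄, x ∈ P.carrier → ∀ {v}, (∃ᶠ y in 𝓝 x, f y = v) ↔ f x ≤ v

theorem IsSplitting.frequently_nhdsNE_iff {c : X → W} {L : X → Set W}
    (hQ : IsSplitting P Q D c L) (hf : IsInteriorExtension Q f) (hL : IsUpperSet (L x))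
    (hx : x ∈ D) {v : W} : (∃ᶠ y in 𝓝[≠] x, f y = v) ↔ v ∈ L x := by
  refine ⟨fun h => ?_, fun hv => frequently_nhdsWithin_iff.2 (frequently_iff.2 fun hU => ?_)⟩
  · obtain ⟨y, rfl, hy⟩ := (h.and_eventually (hQ.eventually_label_mem hx)).exists
    exact hL (hf.label_le y) hy
  · obtain ⟨y, hy, hyU, rfl⟩ := hQ.exists_piece_subset hx hv hU
    obtain ⟨z, hz, hzf⟩ := hf.exists_mem_piece hy
    exact ⟨z, hyU hz, hzf, (ne_of_mem_of_not_mem hx (hQ.carrier_eq ▸ hz.1).2).symm⟩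

end Filling

/-- A sequence of labelled partitions, each of which splits its predecessor along a net `D n`: the
points of the net keep their labels, and the pieces around them take all labels above. -/
structure IsFilling {X : Type u} [PseudoMetricSpace X] [Preorder W]
    (P : ℕ → LabelledPartition X W) (D : ℕ → Set X) : Prop where
  isSplitting : ∀ n, IsSplitting (P n) (P (n + 1)) (D n) (P n).label fun d => Ici ((P n).label d)
  exists_dist_le : ∀ n, ∀ x ∈ (P n).carrier,
    ∃ d ∈ D n, d ∈ (P n).piece x ∧ dist x d ≤ 1 / ((n : ℝ) + 1)

theorem exists_isFilling {X : Type u} [MetricSpace X] [PerfectSpace X] [Preorder W] [Countable W]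
    (hzero : TopologicalSpace.IsTopologicalBasis {s : Set X | IsClopen s})
    (P₀ : LabelledPartition X W) : ∃ P D, P 0 = P₀ ∧ IsFilling P D := by
  choose D hD hsep hnet using fun (n : ℕ) (P : LabelledPartition X W) =>
    exists_net P (Nat.one_div_pos_of_nat (α := ℝ) (n := n))
  choose next hnext using fun n P => exists_isSplitting hzero (hD n P) (hsep n P) P.label
    (L := fun d => Ici (P.label d)) fun _ => nonempty_Ici
  let P (n : ℕ) : LabelledPartition X W := n.rec P₀ next
  exact ⟨P, fun n => D n (P n), rfl, fun n => hnext n (P n), fun n => hnet n (P n)⟩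

namespace IsFilling

variable {X : Type u} [PseudoMetricSpace X] [Preorder W] {P : ℕ → LabelledPartition X W}
  {D : ℕ → Set X} {f : X → W} {x : X} {n : ℕ} (h : IsFilling P D)
include h

theorem monotone_label (x : X) : Monotone fun n => (P n).label x := by
  refine monotone_nat_of_le_succ fun n => ?_
  by_cases hx : x ∈ D n
  · exact ((h.isSplitting n).label_of_mem hx).ge
  · obtain heq | ⟨d, hd, hxd, hle⟩ := (h.isSplitting n).label_of_notMem hx
    · exact heq.ge
    · exact (label_eq_of_mem_piece ((h.isSplitting n).subset_carrier hd) hxd).trans_le hle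

theorem antitone_carrier : Antitone fun n => (P n).carrier :=
  antitone_nat_of_succ_le fun n => (h.isSplitting n).carrier_eq ▸ sdiff_subset

theorem mem_carrier_of_forall_notMem (hx : x ∈ (P 0).carrier) (hxD : ∀ n, x ∉ D n) (n : ℕ) :
    x ∈ (P n).carrier := by
  induction n with
  | zero => exact hx
  | succ n ih => exact (h.isSplitting n).carrier_eq ▸ ⟨ih, hxD n⟩

theorem label_eq_of_notMem_carrier (hx : x ∉ (P n).carrier) {m : ℕ} (hm : n ≤ m) :
    (P m).label x = (P n).label x := by
  induction m, hm using Nat.le_induction with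
  | base => rfl
  | succ m hm ih =>
    have hxm : x ∉ (P m).carrier := notMem_subset (h.antitone_carrier hm) hx
    have hxD : x ∉ D m := notMem_subset (h.isSplitting m).subset_carrier hxm
    obtain heq | ⟨d, -, hxd, -⟩ := (h.isSplitting m).label_of_notMem hxD
    · exact heq.trans ih
    · exact absurd hxd.1 hxm

variable (hf : ∀ x, ∃ᶠ n in atTop, (P n).label x = f x)
include hf

theorem label_le (n : ℕ) (x : X) : (P n).label x ≤ f x := by
  obtain ⟨m, hnm, hm⟩ := frequently_atTop.1 (hf x) n
  exact (h.monotone_label x hnm).trans_eq hm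

theorem eq_label_of_notMem_carrier (hx : x ∉ (P n).carrier) : f x = (P n).label x := by
  obtain ⟨m, hnm, hm⟩ := frequently_atTop.1 (hf x) n
  exact hm.symm.trans (h.label_eq_of_notMem_carrier hx hnm)

theorem eq_label_of_mem (hx : x ∈ D n) : f x = (P n).label x := by
  have hx' : x ∉ (P (n + 1)).carrier := (h.isSplitting n).carrier_eq ▸ fun hx' => hx'.2 hx
  exact (h.eq_label_of_notMem_carrier hf hx').trans ((h.isSplitting n).label_of_mem hx)

theorem exists_mem_piece (hx : x ∈ (P n).carrier) : ∃ y ∈ (P n).piece x, f y = (P n).label x := by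
  obtain ⟨d, hd, hxd, -⟩ := h.exists_dist_le n x hx
  exact ⟨d, hxd, (h.eq_label_of_mem hf hd).trans (label_eq_of_mem_piece hx hxd)⟩

theorem exists_mem_net (hx : x ∈ (P 0).carrier) {U : Set X} (hU : U ∈ 𝓝 x) :
    ∃ n, ∃ d ∈ D n, d ∈ U ∧ (P n).label d = f x := by
  by_cases hxD : ∃ n, x ∈ D n
  · obtain ⟨n, hn⟩ := hxD
    exact ⟨n, x, hn, mem_of_mem_nhds hU, (h.eq_label_of_mem hf hn).symm⟩
  · have hxn := h.mem_carrier_of_forall_notMem hx (not_exists.1 hxD)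
    obtain ⟨ε, hε, hεU⟩ := Metric.mem_nhds_iff.1 hU
    obtain ⟨n, hn, hnε⟩ := ((hf x).and_eventually
      (tendsto_one_div_add_atTop_nhds_zero_nat.eventually_lt_const hε)).exists
    obtain ⟨d, hd, hxd, hdist⟩ := h.exists_dist_le n x (hxn n)
    exact ⟨n, d, hd, hεU (Metric.mem_ball'.2 (hdist.trans_lt hnε)),
      (label_eq_of_mem_piece (hxn n) hxd).trans hn⟩

theorem eventually_le (hx : x ∈ (P 0).carrier) : ∀ᶠ y in 𝓝 x, f x ≤ f y := by
  by_cases hxD : ∃ n, x ∈ D n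
  · obtain ⟨n, hn⟩ := hxD
    rw [← nhdsNE_sup_pure, eventually_sup, eventually_pure]
    refine ⟨((h.isSplitting n).eventually_label_mem hn).mono fun y hy => ?_, le_rfl⟩
    exact (h.eq_label_of_mem hf hn).trans_le (le_trans hy (h.label_le hf _ y))
  · have hxn := h.mem_carrier_of_forall_notMem hx (not_exists.1 hxD)
    obtain ⟨n, hn⟩ := (hf x).exists
    filter_upwards [piece_mem_nhds (hxn n)] with y hy
    exact (hn.symm.trans (label_eq_of_mem_piece (hxn n) hy).symm).trans_le (h.label_le hf n y)

theorem frequently_iff (hx : x ∈ (P 0).carrier) {v : W} :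
    (∃ᶠ y in 𝓝 x, f y = v) ↔ f x ≤ v := by
  refine ⟨fun hv => ?_, fun hv => Filter.frequently_iff.2 fun hU => ?_⟩
  · obtain ⟨y, rfl, hy⟩ := (hv.and_eventually (h.eventually_le hf hx)).exists
    exact hy
  · obtain ⟨n, d, hd, hdU, hdx⟩ := h.exists_mem_net hf hx (interior_mem_nhds.2 hU)
    obtain ⟨y, hy, hyU, rfl⟩ := (h.isSplitting n).exists_piece_subset hd (v := v)
      (hdx.trans_le hv) (isOpen_interior.mem_nhds hdU)
    obtain ⟨z, hz, hzy⟩ := h.exists_mem_piece hf hy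
    exact ⟨z, interior_subset (hyU hz), hzy⟩

theorem isInteriorExtension : IsInteriorExtension (P 0) f where
  eq_label _ := h.eq_label_of_notMem_carrier hf
  label_le := h.label_le hf 0
  exists_mem_piece _ := h.exists_mem_piece hf
  frequently_iff _ hx _ := h.frequently_iff hf hx

end IsFilling

theorem exists_isInteriorExtension {X : Type u} [MetricSpace X] [PerfectSpace X] [Preorder W]
    [Finite W] (hzero : TopologicalSpace.IsTopologicalBasis {s : Set X | IsClopen s})
    (P₀ : LabelledPartition X W) : ∃ f, IsInteriorExtension P₀ f := by
  obtain ⟨P, D, rfl, h⟩ := exists_isFilling hzero P₀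
  have (x : X) : ∃ w, ∃ᶠ n in atTop, (P n).label x = w := by
    by_contra! hne
    obtain ⟨n, hn⟩ := (eventually_all.2 hne).exists
    exact hn _ rfl
  choose f hf using this
  exact ⟨f, h.isInteriorExtension hf⟩

end LabelledPartition

/-! ### Mapping the space onto a finite frame -/

open LabelledPartition in
theorem exists_interior_map {X : Type*} {W : Type*} [MetricSpace X] [PerfectSpace X]
    (hzero : TopologicalSpace.IsTopologicalBasis {s : Set X | IsClopen s}) [Preorder W] [Finite W]
    [Nonempty W] {i : W → X} (hi : Injective i) {L : W → Set W} (hL : ∀ w, (L w).Nonempty)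
    (hLup : ∀ w, IsUpperSet (L w)) :
    ∃ f : X → W, (∀ w, f (i w) = w) ∧
      (∀ w v, (∃ᶠ y in 𝓝[≠] (i w), f y = v) ↔ v ∈ L w) ∧
      ∀ x ∉ range i, (∃ w, f x ∈ L w) ∧ ∀ v, (∃ᶠ y in 𝓝 x, f y = v) ↔ f x ≤ v := by
  obtain ⟨w₀⟩ := ‹Nonempty W›
  obtain ⟨v₀, hv₀⟩ := hL w₀
  have hc : LeftInverse (invFun i) i := leftInverse_invFun hi
  obtain ⟨Q, hQ⟩ := exists_isSplitting hzero (P := const X v₀) (subset_univ (range i))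
    (fun _ => ((finite_range i).inter_of_left _).einfsep_pos) (invFun i)
    (L := fun x => L (invFun i x)) fun x => hL _
  obtain ⟨f, hf⟩ := exists_isInteriorExtension hzero Q
  have hcarrier {x : X} : x ∈ Q.carrier ↔ x ∉ range i := by simp [hQ.carrier_eq]
  refine ⟨f, fun w => ?_, fun w v => ?_, fun x hx =>
    ⟨?_, fun v => hf.frequently_iff (hcarrier.2 hx)⟩⟩
  · have hw : i w ∉ Q.carrier := fun h => hcarrier.1 h ⟨w, rfl⟩
    exact (hf.eq_label hw).trans ((hQ.label_of_mem ⟨w, rfl⟩).trans (hc w))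
  · have := hQ.frequently_nhdsNE_iff (x := i w) (v := v) hf (hLup _) ⟨w, rfl⟩
    rwa [hc w] at this
  · obtain hv | ⟨d, -, -, hd⟩ := hQ.label_of_notMem hx
    · exact ⟨w₀, hLup w₀ (hv.symm.trans_le (hf.label_le x)) hv₀⟩
    · exact ⟨_, hLup _ (hf.label_le x) hd⟩

namespace IsS4DT1SFrame

variable {W : Type} {R RD : W → W → Prop} {u v w : W}

theorem diff_self_of_rel (hF : IsS4DT1SFrame R RD) (h : R w v) (hD : RD w v) : RD v v := by
  by_contra hv
  exact hv (hF.t1 v hv w h ▸ hD)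

theorem diff_of_rel_of_rel (hF : IsS4DT1SFrame R RD) (hwv : R w v) (hD : RD w v) (hvu : R v u) :
    RD w u := by
  obtain h | rfl := hF.inc (hF.trans hwv hvu)
  · exact h
  · by_contra hw
    exact hw (hF.t1 w hw v hvu ▸ hD)

theorem isCdPMorphism (hF : IsS4DT1SFrame R RD) (hRD : Pairwise RD) {X : Type}
    [TopologicalSpace X] {f : X → W} {i : W → X} (hfi : ∀ w, f (i w) = w)
    (hne : ∀ w v, (∃ᶠ y in 𝓝[≠] (i w), f y = v) ↔ R w v ∧ RD w v)
    (hx : ∀ x ∉ range i, (∃ w, R w (f x) ∧ RD w (f x)) ∧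
      ∀ v, (∃ᶠ y in 𝓝 x, f y = v) ↔ R (f x) v) : IsCdPMorphism R RD f := by
  have diff_self {x : X} (hxi : x ∉ range i) : RD (f x) (f x) := by
    obtain ⟨w, hw, hwD⟩ := (hx x hxi).1
    exact hF.diff_self_of_rel hw hwD
  refine ⟨fun w => ⟨i w, hfi w⟩, fun w => Set.ext fun x => ?_, fun w => Set.ext fun x => ?_⟩
  · rw [mem_closure_iff_frequently]
    by_cases hxi : x ∈ range i
    · obtain ⟨u, rfl⟩ := hxi
      rw [← nhdsNE_sup_pure, frequently_sup]
      simp only [mem_preimage, mem_singleton_iff, hne, frequently_pure, hfi, mem_ofPred_eq]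
      refine ⟨?_, fun h => (hF.inc h).imp_left fun hD => ⟨h, hD⟩⟩
      rintro (h | rfl)
      exacts [h.1, hF.refl u]
    · exact (hx x hxi).2 w
  · simp only [mem_ofPred_eq, mem_preimage]
    obtain rfl | hfx := eq_or_ne (f x) w
    · by_cases hxi : x ∈ range i
      · obtain ⟨u, rfl⟩ := hxi
        rw [hfi]
        refine ⟨?_, fun hu => ?_⟩
        · rintro ⟨y, hy, rfl⟩
          refine diff_self ?_
          rintro ⟨v, rfl⟩
          exact hy (congrArg i (hfi v).symm)
        · obtain ⟨y, hy⟩ := (frequently_nhdsWithin_iff.1 ((hne u u).2 ⟨hF.refl u, hu⟩)).exists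
          exact ⟨y, hy.symm⟩
      · exact iff_of_true ⟨i (f x), fun h => hxi ⟨_, h⟩, hfi _⟩ (diff_self hxi)
    · exact iff_of_true ⟨i w, fun h => hfx (h ▸ hfi w), hfi w⟩ (hRD hfx)

theorem exists_isCdPMorphism {X : Type} [MetricSpace X] [PerfectSpace X] [Nonempty X]
    (hzero : TopologicalSpace.IsTopologicalBasis {s : Set X | IsClopen s}) [Finite W] [Nonempty W]
    (hF : IsS4DT1SFrame R RD) (hRD : Pairwise RD) : ∃ f : X → W, IsCdPMorphism R RD f := by
  let _ : Preorder W :=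
    { le := R, le_refl := hF.refl, le_trans := fun _ _ _ hxy hyz => hF.trans hxy hyz }
  have : Infinite X := infinite_univ_iff.1 (infinite_of_mem_nhds (Classical.arbitrary X) univ_mem)
  obtain ⟨g⟩ := nonempty_embedding_nat W
  obtain ⟨f, hfi, hne, hx⟩ := exists_interior_map hzero
    (g.trans (Infinite.natEmbedding X)).injective (hF.isDSFrame_iff.1 hF.ds)
    fun w v u hvu hv => ⟨hF.trans hv.1 hvu, hF.diff_of_rel_of_rel hv.1 hv.2 hvu⟩
  exact ⟨f, hF.isCdPMorphism hRD hfi hne hx⟩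

end IsS4DT1SFrame

/-- S4DT1S is the D-logic of any nonempty zero-dimensional
dense-in-itself metric space. -/
theorem s4dt1s_complete_wrt_zero_dim_metric (X : Type) [MetricSpace X] [Nonempty X]
    (hzero : TopologicalSpace.IsTopologicalBasis {s : Set X | IsClopen s})
    (hdii : ∀ x : X, ¬ IsOpen ({x} : Set X)) (A : BForm) :
    S4DT1S A ↔ tvalid X A := by
  have : PerfectSpace X := perfectSpace_iff_forall_not_isolated.2 fun x =>
    neBot_iff.2 fun h => hdii x ((isOpen_singleton_iff_punctured_nhds x).2 h)
  refine ⟨S4DT1S.tvalid X, fun hA => ?_⟩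
  by_contra hlogic
  obtain ⟨V, _, R, RD, hF, hRD, hval⟩ := exists_finite_frame hlogic
  have : Nonempty V := by
    by_contra hV
    exact hval fun _ v => absurd ⟨v⟩ hV
  obtain ⟨f, hf⟩ := hF.exists_isCdPMorphism hzero hRD
  exact hval (hf.kvalid_of_tvalid hA)
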